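/- Let v, d, V be reals with b_max·Δt ≤ v, d ≥ 0, V ≥ 0, and B_ex(v) ≤ d + B_ex(V). Then the deceleration a := −b_max belongs to the compliance set S for the constraint (d, V): indeed v − b_max·Δt ≥ 0; if d > 0 then v·Δt − b_max·Δt²/2 + B_ex(v − b_max·Δt) ≤ d + B_ex(V); and if d = 0 then v − b_max·Δt ≤ V. -/

import Mathlib

/-!
Unfolding the recursion once at `v ≥ bmax * Δt` turns the hypothesis `Bex v ≤ d + Bex V` into
exactly the inequality required when `d > 0`. When `d = 0` the hypothesis reads `Bex v ≤ Bex V`;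
since `Bex` is strictly increasing on `[0, ∞)` (`Bex_lt_Bex`), this gives `v ≤ V`, which is
stronger than `v - bmax * Δt ≤ V`.
-/

/-- The compliance set `S` for a single speed-limit constraint `(d, V)`, given current
speed `v`, maximal deceleration `bmax`, maximal acceleration `amax`, control period `Δt`
and the braking function `Bex`:
`S = { a ∈ [−bmax, amax] : v + a·Δt ≥ 0, and (d > 0 and
v·Δt + a·Δt²/2 + Bex (v + a·Δt) ≤ d + Bex V) or (d = 0 and v + a·Δt ≤ V) }`. -/
def compSet (bmax amax Δt : ℝ) (Bex : ℝ → ℝ) (v d V : ℝ) : Set ℝ :=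
  {a | a ∈ Set.Icc (-bmax) amax ∧ 0 ≤ v + a * Δt ∧
    ((0 < d ∧ v * Δt + a * Δt ^ 2 / 2 + Bex (v + a * Δt) ≤ d + Bex V) ∨
     (d = 0 ∧ v + a * Δt ≤ V))}

/-- The braking function is strictly increasing on `[0, ∞)`. The induction is on the number `n` of
braking steps that suffice to bring the larger speed `y` below `bmax * Δt`. -/
lemma Bex_lt_Bex {bmax Δt : ℝ} (hb : 0 < bmax) (ht : 0 < Δt) {Bex : ℝ → ℝ}
    (hBex1 : ∀ v, 0 ≤ v → v < bmax * Δt → Bex v = v * Δt / 2)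
    (hBex2 : ∀ v, bmax * Δt ≤ v → Bex v = v * Δt - bmax * Δt ^ 2 / 2 + Bex (v - bmax * Δt))
    {x y : ℝ} (hx : 0 ≤ x) (hxy : x < y) : Bex x < Bex y := by
  have hc : 0 < bmax * Δt := mul_pos hb ht
  have hzero : Bex 0 = 0 := by rw [hBex1 0 le_rfl hc]; ring
  suffices H : ∀ n : ℕ, ∀ x y : ℝ, 0 ≤ x → x < y → y < (n + 1) * (bmax * Δt) → Bex x < Bex y by
    obtain ⟨n, hn⟩ := exists_nat_gt (y / (bmax * Δt))
    rw [div_lt_iff₀ hc] at hn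
    exact H n x y hx hxy (by linarith)
  clear hx hxy x y
  intro n
  induction n with
  | zero =>
    intro x y hx hxy hy
    have hyc : y < bmax * Δt := by simpa using hy
    rw [hBex1 x hx (hxy.trans hyc), hBex1 y (hx.trans hxy.le) hyc]
    linarith [mul_lt_mul_of_pos_right hxy ht]
  | succ n ih =>
    intro x y hx hxy hy
    push_cast at hy
    have hmul := mul_lt_mul_of_pos_right hxy ht
    rcases lt_or_ge y (bmax * Δt) with hyc | hyc
    · rw [hBex1 x hx (hxy.trans hyc), hBex1 y (hx.trans hxy.le) hyc]
      linarith
    rcases lt_or_ge x (bmax * Δt) with hxc | hxc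
    · -- Here `Bex x < bmax * Δt ^ 2 / 2 ≤ Bex y`, the latter because `Bex (y - bmax * Δt) ≥ 0`.
      have hnonneg : 0 ≤ Bex (y - bmax * Δt) := by
        rcases (sub_nonneg.2 hyc).eq_or_lt with h | h
        · rw [← h, hzero]
        · exact hzero ▸ (ih 0 _ le_rfl h (by linarith)).le
      rw [hBex1 x hx hxc, hBex2 y hyc]
      have h1 := mul_lt_mul_of_pos_right hxc ht
      have h2 := mul_le_mul_of_nonneg_right hyc ht.le
      nlinarith
    · have := ih (x - bmax * Δt) (y - bmax * Δt) (by linarith) (by linarith) (by linarith)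
      rw [hBex2 x hxc, hBex2 y hyc]
      linarith

/-- if `b_max·Δt ≤ v`, `d ≥ 0`, `V ≥ 0` and `B_ex v ≤ d + B_ex V`, then the
deceleration `a := −b_max` belongs to the compliance set `S` for the constraint `(d, V)`:
indeed `v − b_max·Δt ≥ 0`; if `d > 0` then
`v·Δt − b_max·Δt²/2 + B_ex (v − b_max·Δt) ≤ d + B_ex V`; and if `d = 0` then
`v − b_max·Δt ≤ V`. Here `B_ex` is any function satisfying the defining recursion. -/
theorem neg_bmax_mem_compSet
    (bmax amax Δt : ℝ) (hb : 0 < bmax) (ha : 0 < amax) (ht : 0 < Δt)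
    (Bex : ℝ → ℝ)
    (hBex1 : ∀ v, 0 ≤ v → v < bmax * Δt → Bex v = v * Δt / 2)
    (hBex2 : ∀ v, bmax * Δt ≤ v → Bex v = v * Δt - bmax * Δt ^ 2 / 2 + Bex (v - bmax * Δt))
    (v d V : ℝ) (hv : bmax * Δt ≤ v) (hd : 0 ≤ d) (hV : 0 ≤ V)
    (hctrl : Bex v ≤ d + Bex V) :
    -bmax ∈ compSet bmax amax Δt Bex v d V ∧
    0 ≤ v - bmax * Δt ∧
    (0 < d → v * Δt - bmax * Δt ^ 2 / 2 + Bex (v - bmax * Δt) ≤ d + Bex V) ∧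
    (d = 0 → v - bmax * Δt ≤ V) := by
  have hpos : 0 ≤ v - bmax * Δt := by linarith
  have hunf : v * Δt - bmax * Δt ^ 2 / 2 + Bex (v - bmax * Δt) ≤ d + Bex V := by
    rwa [hBex2 v hv] at hctrl
  have hspeed : d = 0 → v - bmax * Δt ≤ V := by
    intro h0
    have hvV : v ≤ V := by
      by_contra! hlt
      have := Bex_lt_Bex hb ht hBex1 hBex2 hV hlt
      linarith
    linarith [mul_pos hb ht]
  have hv' : v + -bmax * Δt = v - bmax * Δt := by ring
  refine ⟨⟨⟨le_rfl, by linarith⟩, by rwa [hv'], ?_⟩, hpos, fun _ => hunf, hspeed⟩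
  rw [hv']
  rcases hd.eq_or_lt with h | h
  · exact Or.inr ⟨h.symm, hspeed h.symm⟩
  · exact Or.inl ⟨h, by linarith⟩
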